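/- For every automorphism φ of F₂ one has ‖φ(a)‖ ≤ ‖φ(a·[a,b])‖ ≤ 5·‖φ(a)‖, where a·[a,b] = a·a·b·a⁻¹·b⁻¹. In particular, a and a·[a,b] are boundedly translation equivalent in F₂. -/

import Mathlib

noncomputable section

/-- The free group of rank two. -/
abbrev F : Type := FreeGroup (Fin 2)

/-- The generator `a`. -/
def ga : F := FreeGroup.of 0

/-- The generator `b`. -/
def gb : F := FreeGroup.of 1

/-- Build an automorphism of `F` from images of the generators together with
an explicit inverse. -/
def mkAut (x y xi yi : F)
    (h1 : FreeGroup.lift ![xi, yi] x = ga)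
    (h2 : FreeGroup.lift ![xi, yi] y = gb)
    (h3 : FreeGroup.lift ![x, y] xi = ga)
    (h4 : FreeGroup.lift ![x, y] yi = gb) : MulAut F :=
  MonoidHom.toMulEquiv (FreeGroup.lift ![x, y]) (FreeGroup.lift ![xi, yi])
    (by
      ext i
      fin_cases i
      · simpa [ga] using h1
      · simpa [gb] using h2)
    (by
      ext i
      fin_cases i
      · simpa [ga] using h3
      · simpa [gb] using h4)

/-- `σ : a ↦ ab, b ↦ b`. -/
def σ : MulAut F :=
  mkAut (ga * gb) gb (ga * gb⁻¹) gb
    (by simp [ga, gb]) (by simp [ga, gb]) (by simp [ga, gb]) (by simp [ga, gb])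

/-- `τ : a ↦ a, b ↦ ba`. -/
def τ : MulAut F :=
  mkAut ga (gb * ga) ga (gb * ga⁻¹)
    (by simp [ga, gb]) (by simp [ga, gb]) (by simp [ga, gb]) (by simp [ga, gb])

/-- `δ₁ : a ↦ b⁻¹ab, b ↦ b`. -/
def δ₁ : MulAut F :=
  mkAut (gb⁻¹ * ga * gb) gb (gb * ga * gb⁻¹) gb
    (by simp [ga, gb, mul_assoc]) (by simp [ga, gb]) (by simp [ga, gb, mul_assoc]) (by simp [ga, gb])

/-- `δ₂ : a ↦ bab⁻¹, b ↦ b`. -/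
def δ₂ : MulAut F :=
  mkAut (gb * ga * gb⁻¹) gb (gb⁻¹ * ga * gb) gb
    (by simp [ga, gb, mul_assoc]) (by simp [ga, gb]) (by simp [ga, gb, mul_assoc]) (by simp [ga, gb])

/-- `δ₃ : a ↦ a, b ↦ a⁻¹ba`. -/
def δ₃ : MulAut F :=
  mkAut ga (ga⁻¹ * gb * ga) ga (ga * gb * ga⁻¹)
    (by simp [ga, gb]) (by simp [ga, gb, mul_assoc]) (by simp [ga, gb]) (by simp [ga, gb, mul_assoc])

/-- `δ₄ : a ↦ a, b ↦ aba⁻¹`. -/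
def δ₄ : MulAut F :=
  mkAut ga (ga * gb * ga⁻¹) ga (ga⁻¹ * gb * ga)
    (by simp [ga, gb]) (by simp [ga, gb, mul_assoc]) (by simp [ga, gb]) (by simp [ga, gb, mul_assoc])

/-- `π : a ↦ b, b ↦ a⁻¹`. -/
def pi' : MulAut F :=
  mkAut gb ga⁻¹ gb⁻¹ ga
    (by simp [ga, gb]) (by simp [ga, gb]) (by simp [ga, gb]) (by simp [ga, gb])

/-- Word length of (the reduced word representing) an element of `F`. -/
def len (w : F) : ℕ := w.toWord.length

/-- Cyclic length: minimal word length among all conjugates. -/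
def cyclen (w : F) : ℕ := sInf {n | ∃ g : F, len (g * w * g⁻¹) = n}

/-- The chain `τ^{m_k}σ^{l_k}⋯τ^{m_1}σ^{l_1}` of type (C1) determined by the list
`[(l_k, m_k), …, (l_1, m_1)]` of pairs of exponents. -/
def chainC1 (c : List (ℕ × ℕ)) : MulAut F :=
  (c.map fun p => τ ^ p.2 * σ ^ p.1).prod

/-- The chain `τ^{-m_k}σ^{-l_k}⋯τ^{-m_1}σ^{-l_1}` of type (C2) determined by the list
`[(l_k, m_k), …, (l_1, m_1)]` of pairs of exponents. -/
def chainC2 (c : List (ℕ × ℕ)) : MulAut F :=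
  (c.map fun p => (τ ^ p.2)⁻¹ * (σ ^ p.1)⁻¹).prod

/-- Number of factors of `σ` in a chain. -/
def sigmaCount (c : List (ℕ × ℕ)) : ℕ := (c.map Prod.fst).sum

/-- Number of factors of `τ` in a chain. -/
def tauCount (c : List (ℕ × ℕ)) : ℕ := (c.map Prod.snd).sum

/-- The length `Σ (l_i + m_i)` of a chain. -/
def chainLen (c : List (ℕ × ℕ)) : ℕ := sigmaCount c + tauCount c

/-- A Whitehead automorphism of type (W1): it permutes `{a, a⁻¹, b, b⁻¹}`. -/
def IsW1 (β : MulAut F) : Prop :=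
  β ga ∈ ({ga, ga⁻¹, gb, gb⁻¹} : Set F) ∧ β gb ∈ ({ga, ga⁻¹, gb, gb⁻¹} : Set F)

/-- A chain of type (C1). -/
def IsC1 (φ : MulAut F) : Prop := ∃ c : List (ℕ × ℕ), c ≠ [] ∧ φ = chainC1 c

/-- A chain of type (C2). -/
def IsC2 (φ : MulAut F) : Prop := ∃ c : List (ℕ × ℕ), c ≠ [] ∧ φ = chainC2 c

/-- A positive element: a product of the generators `a` and `b`. -/
def IsPositive (w : F) : Prop := w ∈ Submonoid.closure ({ga, gb} : Set F)

/-- The four automorphisms `δ₁, δ₂, δ₃, δ₄`. -/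
def δIdx : Fin 4 → MulAut F := ![δ₁, δ₂, δ₃, δ₄]

/-!
Among the pairs obtained from a generating pair `(x, y)` of `F` by Nielsen moves and simultaneous
conjugation, one of minimal total length is Nielsen reduced, so every element of length one is a
letter of it. Hence `(x, y)` is reached from `(a, b)` by such moves. Up to conjugation and signs,
positive moves `(p, q) ↦ (p * q, q)` and swaps suffice, applied to a pair `(a', b')` with
`a' = a^±1` and `b' = b^±1`: a quotient move either undoes a positive one or, at the start, only
changes the sign of `a'` or `b'`.

For a pair `(p, q)` reached positively, `p` is a positive word in `a'` and `b'`. So the length of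
`p` is its exponent sum in `a'` and `b'`, which bounds the cyclic length of `p * [p, q]` from below
because commutators have exponent sum zero. Moreover `q = r * p ^ k` with `r` no longer than `p`,
whence `p * [p, q] = p * p * r * p⁻¹ * r⁻¹` has length at most five times that of `p`.
-/

section GromovProduct

open FreeGroup

variable {α : Type*}

theorem isReduced_invRev {L : List (α × Bool)} (hL : IsReduced L) : IsReduced (invRev L) := by
  classical
  rw [isReduced_iff_reduce_eq, reduce_invRev, hL.reduce_eq]

theorem isReduced_invRev_cons_append_cons {l m : α × Bool} {L M : List (α × Bool)}
    (hL : IsReduced (l :: L)) (hM : IsReduced (m :: M)) (hlm : l ≠ m) :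
    IsReduced (invRev (l :: L) ++ m :: M) := by
  refine List.isChain_append.2 ⟨isReduced_invRev hL, hM, ?_⟩
  have hlast : (invRev (l :: L)).getLast? = some (l.1, !l.2) := by simp [invRev]
  simp only [hlast, List.head?_cons, Option.mem_some_iff, forall_eq']
  intro hfst
  simpa [Bool.not_eq_eq_eq_not, Bool.eq_not_iff] using fun hsnd => hlm (Prod.ext hfst hsnd)

theorem exists_common_prefix {L M : List (α × Bool)} (hL : IsReduced L) (hM : IsReduced M) :
    ∃ P A B, L = P ++ A ∧ M = P ++ B ∧ IsReduced (invRev A ++ B) := by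
  induction L generalizing M with
  | nil => exact ⟨[], [], M, rfl, rfl, by simpa using hM⟩
  | cons l L ih =>
    cases M with
    | nil => exact ⟨[], l :: L, [], rfl, rfl, by simpa using isReduced_invRev hL⟩
    | cons m M =>
      by_cases hlm : l = m
      · subst hlm
        obtain ⟨P, A, B, rfl, rfl, hAB⟩ := ih hL.tail hM.tail
        exact ⟨l :: P, A, B, rfl, rfl, hAB⟩
      · exact ⟨[], l :: L, m :: M, rfl, rfl, isReduced_invRev_cons_append_cons hL hM hlm⟩

variable [DecidableEq α]

theorem mk_mul_mk_of_toWord_eq_append {g : FreeGroup α} {P A : List (α × Bool)}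
    (hg : g.toWord = P ++ A) : mk P * mk A = g := by
  rw [mul_mk, ← hg, mk_toWord]

theorem norm_eq_of_toWord_eq_append {g : FreeGroup α} {P A : List (α × Bool)}
    (hg : g.toWord = P ++ A) : g.norm = P.length + A.length := by
  rw [FreeGroup.norm, hg, List.length_append]

theorem norm_mk_of_isReduced {L : List (α × Bool)} (hL : IsReduced L) :
    (mk L).norm = L.length := by
  rw [FreeGroup.norm, toWord_mk, hL.reduce_eq]

theorem exists_toWord_eq_append_append (g h : FreeGroup α) :
    ∃ P A B, g.toWord = P ++ A ∧ h.toWord = P ++ B ∧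
      (g⁻¹ * h).norm = A.length + B.length := by
  obtain ⟨P, A, B, hg, hh, hAB⟩ :=
    exists_common_prefix (isReduced_toWord (x := g)) (isReduced_toWord (x := h))
  refine ⟨P, A, B, hg, hh, ?_⟩
  have hgh : g⁻¹ * h = mk (invRev A ++ B) := by
    rw [← mk_mul_mk_of_toWord_eq_append hg, ← mk_mul_mk_of_toWord_eq_append hh, ← mul_mk,
      ← inv_mk]
    group
  rw [hgh, norm_mk_of_isReduced hAB, List.length_append, invRev_length]

/-- The Gromov product of `g` and `h` in the Cayley tree, based at `1`: the length of the longest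
common prefix of their reduced words. The division and the subtraction are exact, see
`norm_inv_mul_add_two_mul_gromovProduct`. -/
def gromovProduct (g h : FreeGroup α) : ℕ := (g.norm + h.norm - (g⁻¹ * h).norm) / 2

theorem gromovProduct_eq_length {g h : FreeGroup α} {P A B : List (α × Bool)}
    (hg : g.toWord = P ++ A) (hh : h.toWord = P ++ B)
    (hgh : (g⁻¹ * h).norm = A.length + B.length) : gromovProduct g h = P.length := by
  rw [gromovProduct, hgh, norm_eq_of_toWord_eq_append hg, norm_eq_of_toWord_eq_append hh]
  omega

theorem norm_inv_mul_add_two_mul_gromovProduct (g h : FreeGroup α) :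
    (g⁻¹ * h).norm + 2 * gromovProduct g h = g.norm + h.norm := by
  obtain ⟨P, A, B, hg, hh, hgh⟩ := exists_toWord_eq_append_append g h
  rw [gromovProduct_eq_length hg hh hgh, hgh, norm_eq_of_toWord_eq_append hg,
    norm_eq_of_toWord_eq_append hh]
  omega

theorem norm_mul_add_two_mul_gromovProduct (g h : FreeGroup α) :
    (g * h).norm + 2 * gromovProduct g⁻¹ h = g.norm + h.norm := by
  simpa [norm_inv_eq] using norm_inv_mul_add_two_mul_gromovProduct g⁻¹ h

theorem gromovProduct_comm (g h : FreeGroup α) : gromovProduct g h = gromovProduct h g := by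
  rw [gromovProduct, gromovProduct, add_comm, ← norm_inv_eq (x := g⁻¹ * h), mul_inv_rev, inv_inv]

theorem gromovProduct_self (g : FreeGroup α) : gromovProduct g g = g.norm := by
  simp [gromovProduct, ← two_mul]

theorem gromovProduct_mul_left_self_add (g h : FreeGroup α) :
    gromovProduct (g * h) g + gromovProduct g⁻¹ h = g.norm := by
  have hmul := norm_mul_add_two_mul_gromovProduct g h
  have hself := norm_inv_mul_add_two_mul_gromovProduct (g * h) g
  rw [show (g * h)⁻¹ * g = h⁻¹ by group, norm_inv_eq] at hself
  omega

theorem gromovProduct_inv_mul_inv {p g : FreeGroup α} (h : p.norm + (p⁻¹ * g).norm = g.norm) :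
    gromovProduct (p⁻¹ * g)⁻¹ g⁻¹ = (p⁻¹ * g).norm := by
  have := norm_inv_mul_add_two_mul_gromovProduct (p⁻¹ * g)⁻¹ g⁻¹
  rw [show (p⁻¹ * g)⁻¹⁻¹ * g⁻¹ = p⁻¹ by group] at this
  simp only [norm_inv_eq] at this
  omega

theorem le_gromovProduct_iff {g h : FreeGroup α} {n : ℕ} :
    n ≤ gromovProduct g h ↔
      n ≤ g.norm ∧ n ≤ h.norm ∧ g.toWord.take n = h.toWord.take n := by
  constructor
  · intro hn
    obtain ⟨P, A, B, hg, hh, hgh⟩ := exists_toWord_eq_append_append g h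
    rw [gromovProduct_eq_length hg hh hgh] at hn
    rw [norm_eq_of_toWord_eq_append hg, norm_eq_of_toWord_eq_append hh, hg, hh,
      List.take_append_of_le_length hn, List.take_append_of_le_length hn]
    exact ⟨by omega, by omega, rfl⟩
  · rintro ⟨hng, hnh, htake⟩
    have hg := mk_mul_mk_of_toWord_eq_append (List.take_append_drop n g.toWord).symm
    have hh := mk_mul_mk_of_toWord_eq_append (List.take_append_drop n h.toWord).symm
    have hgh : g⁻¹ * h = (mk (g.toWord.drop n))⁻¹ * mk (h.toWord.drop n) := by
      rw [← htake] at hh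
      nth_rw 1 [← hg, ← hh]
      group
    have hle : (g⁻¹ * h).norm ≤ (g.norm - n) + (h.norm - n) := by
      rw [hgh, FreeGroup.norm.eq_1 g, FreeGroup.norm.eq_1 h, ← List.length_drop, ← List.length_drop]
      refine (FreeGroup.norm_mul_le _ _).trans (add_le_add ?_ norm_mk_le)
      rw [norm_inv_eq]
      exact norm_mk_le
    have := norm_inv_mul_add_two_mul_gromovProduct g h
    omega

theorem le_gromovProduct_trans {g h k : FreeGroup α} {n : ℕ} (hgh : n ≤ gromovProduct g h)
    (hhk : n ≤ gromovProduct h k) : n ≤ gromovProduct g k := by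
  rw [le_gromovProduct_iff] at *
  exact ⟨hgh.1, hhk.2.1, hgh.2.2.trans hhk.2.2⟩

theorem gromovProduct_eq_of_lt {g h k : FreeGroup α}
    (hlt : gromovProduct g k < gromovProduct h k) : gromovProduct g h = gromovProduct g k := by
  refine le_antisymm ?_ (le_gromovProduct_trans le_rfl (gromovProduct_comm h k ▸ hlt.le))
  by_contra! hgt
  exact (le_gromovProduct_trans hgt hlt).not_gt (Nat.lt_succ_self _)

theorem exists_norm_eq_gromovProduct (g h : FreeGroup α) :
    ∃ p, p.norm = gromovProduct g h ∧ p.norm + (p⁻¹ * g).norm = g.norm ∧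
      p.norm + (p⁻¹ * h).norm = h.norm := by
  obtain ⟨P, A, B, hg, hh, hgh⟩ := exists_toWord_eq_append_append g h
  have norm_prefix : ∀ {k : FreeGroup α} {D : List (α × Bool)}, k.toWord = P ++ D →
      (mk P).norm = P.length ∧ (mk P).norm + ((mk P)⁻¹ * k).norm = k.norm := by
    intro k D hk
    have hPD : IsReduced (P ++ D) := hk ▸ isReduced_toWord
    have hP : (mk P).norm = P.length := norm_mk_of_isReduced (hPD.infix ⟨[], D, by simp⟩)
    have hD : (mk D).norm = D.length := norm_mk_of_isReduced (hPD.infix ⟨P, [], by simp⟩)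
    have hinv : (mk P)⁻¹ * k = mk D := by
      rw [← mk_mul_mk_of_toWord_eq_append hk, inv_mul_cancel_left]
    exact ⟨hP, by rw [hinv, hP, hD, norm_eq_of_toWord_eq_append hk]⟩
  exact ⟨mk P, (norm_prefix hg).1.trans (gromovProduct_eq_length hg hh hgh).symm,
    (norm_prefix hg).2, (norm_prefix hh).2⟩

theorem norm_lt_norm_mul_self {g : FreeGroup α} (hg : g ≠ 1) : g.norm < (g * g).norm := by
  let c := reduceCyclically.conjugator g.toWord
  let r := reduceCyclically g.toWord
  have hpow : ∀ n, (g ^ (n + 1)).norm = 2 * c.length + (n + 1) * r.length := by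
    intro n
    rw [FreeGroup.norm, toWord_pow,
      reduceCyclically.reduce_flatten_replicate_succ isReduced_toWord]
    simp only [List.length_append, List.length_flatten, List.map_replicate, List.sum_replicate,
      smul_eq_mul, invRev_length, c, r]
    ring
  have hr : r.length ≠ 0 := by
    intro hlen
    have hr : reduceCyclically g.toWord = [] := List.eq_nil_of_length_eq_zero hlen
    apply hg
    rw [← mk_toWord (x := g), ← reduceCyclically.conj_conjugator_reduceCyclically g.toWord,
      hr, List.append_nil, ← mul_mk, ← inv_mk, mul_inv_cancel]
  have hg₁ := hpow 0
  have hg₂ := hpow 1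
  rw [zero_add, pow_one] at hg₁
  rw [one_add_one_eq_two, pow_two] at hg₂
  omega

theorem two_mul_gromovProduct_inv_self_lt {g : FreeGroup α} (hg : g ≠ 1) :
    2 * gromovProduct g⁻¹ g < g.norm := by
  have := norm_mul_add_two_mul_gromovProduct g g
  have := norm_lt_norm_mul_self hg
  omega

end GromovProduct

section NielsenReduction

/-- A set `S` of elements of a free group, thought of as the letters of an alphabet, is Nielsen
reduced if in every product `u * v * w` of three letters without trivial cancellation some part of
`v` survives. For inverse-closed `S` this is implied by the usual conditions of that name. -/
structure IsNielsenReduced {α : Type*} [DecidableEq α] (S : Set (FreeGroup α)) : Prop where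
  one_notMem : 1 ∉ S
  gromovProduct_add_lt : ∀ u ∈ S, ∀ v ∈ S, ∀ w ∈ S, u * v ≠ 1 → v * w ≠ 1 →
    gromovProduct u⁻¹ v + gromovProduct v⁻¹ w < v.norm

variable {α : Type*} [DecidableEq α] {S : Set (FreeGroup α)}

theorem IsNielsenReduced.mul_self_ne_one (hS : IsNielsenReduced S) {v : FreeGroup α}
    (hv : v ∈ S) : v * v ≠ 1 := by
  rw [← pow_two, Ne, pow_eq_one_iff_left two_ne_zero]
  exact ne_of_mem_of_not_mem hv hS.one_notMem

/- The invariant behind the length bound: whatever a further letter can cancel of the first letter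
`v`, strictly more of `v` survives in the product. -/
theorem IsNielsenReduced.gromovProduct_prod_bounds (hS : IsNielsenReduced S) {v : FreeGroup α}
    {L : List (FreeGroup α)} (hL : ∀ t ∈ v :: L, t ∈ S)
    (hchain : (v :: L).IsChain (· * · ≠ 1)) :
    (∀ u ∈ S, u * v ≠ 1 → gromovProduct u⁻¹ v < gromovProduct (v :: L).prod v) ∧
      gromovProduct (v :: L).prod v + L.length ≤ (v :: L).prod.norm := by
  have hv : v ∈ S := hL v List.mem_cons_self
  induction L generalizing v with
  | nil =>
    rw [List.prod_singleton, gromovProduct_self]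
    refine ⟨fun u hu huv => ?_, le_rfl⟩
    have hvv := hS.mul_self_ne_one hv
    exact (Nat.le_add_right _ _).trans_lt (hS.gromovProduct_add_lt u hu v hv v hv huv hvv)
  | cons w L ih =>
    obtain ⟨hvw, hwL⟩ := List.isChain_cons_cons.1 hchain
    have hw : w ∈ S := hL w (by simp)
    obtain ⟨hlt, hnorm⟩ := ih (fun t ht => hL t (List.mem_cons_of_mem v ht)) hwL hw
    rw [List.prod_cons]
    generalize (w :: L).prod = g at hlt hnorm ⊢
    have hcancel : gromovProduct v⁻¹ g = gromovProduct v⁻¹ w :=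
      gromovProduct_eq_of_lt (hlt v hv hvw)
    have hmul := norm_mul_add_two_mul_gromovProduct v g
    have hself := gromovProduct_mul_left_self_add v g
    have hvw_lt := hlt v hv hvw
    refine ⟨fun u hu huv => ?_, ?_⟩
    · have := hS.gromovProduct_add_lt u hu v hv w hw huv hvw
      omega
    · rw [List.length_cons]
      omega

theorem IsNielsenReduced.length_le_norm_prod (hS : IsNielsenReduced S) {L : List (FreeGroup α)}
    (hL : ∀ t ∈ L, t ∈ S) (hchain : L.IsChain (· * · ≠ 1)) : L.length ≤ L.prod.norm := by
  cases L with
  | nil => exact Nat.zero_le _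
  | cons v L =>
    have hv : v ∈ S := hL v List.mem_cons_self
    obtain ⟨hlt, hnorm⟩ := hS.gromovProduct_prod_bounds hL hchain
    have := hlt v hv (hS.mul_self_ne_one hv)
    rw [List.length_cons]
    omega

theorem exists_list_isChain_of_mem_closure {G : Type*} [Group G] {S : Set G}
    (hS : ∀ s ∈ S, s⁻¹ ∈ S) {g : G} (hg : g ∈ Subgroup.closure S) :
    ∃ L : List G, (∀ t ∈ L, t ∈ S) ∧ L.IsChain (· * · ≠ 1) ∧ L.prod = g := by
  have cons_mem : ∀ s ∈ S, ∀ L : List G, (∀ t ∈ L, t ∈ S) → L.IsChain (· * · ≠ 1) →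
      ∃ L' : List G, (∀ t ∈ L', t ∈ S) ∧ L'.IsChain (· * · ≠ 1) ∧ L'.prod = s * L.prod := by
    intro s hs L hL hchain
    rcases L with _ | ⟨t, L⟩
    · exact ⟨[s], by simpa using hs, List.isChain_singleton s, by simp⟩
    by_cases hst : s * t = 1
    · refine ⟨L, fun u hu => hL u (List.mem_cons_of_mem t hu), hchain.tail, ?_⟩
      rw [List.prod_cons, ← mul_assoc, hst, one_mul]
    · exact ⟨s :: t :: L, List.forall_mem_cons.2 ⟨hs, hL⟩,
        List.isChain_cons_cons.2 ⟨hst, hchain⟩, List.prod_cons⟩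
  induction hg using Subgroup.closure_induction_left with
  | one => exact ⟨[], by simp, List.isChain_nil, rfl⟩
  | mul_left s hs g _ ih =>
    obtain ⟨L, hL, hchain, rfl⟩ := ih
    exact cons_mem s hs L hL hchain
  | inv_mul_cancel s hs g _ ih =>
    obtain ⟨L, hL, hchain, rfl⟩ := ih
    exact cons_mem s⁻¹ (hS s hs) L hL hchain

theorem IsNielsenReduced.mem_of_norm_eq_one (hS : IsNielsenReduced S)
    (hinv : ∀ s ∈ S, s⁻¹ ∈ S) {g : FreeGroup α} (hg : g ∈ Subgroup.closure S)
    (hnorm : g.norm = 1) : g ∈ S := by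
  obtain ⟨L, hL, hchain, rfl⟩ := exists_list_isChain_of_mem_closure hinv hg
  have hlen := hS.length_le_norm_prod hL hchain
  match L with
  | [] => simp at hnorm
  | [t] => simpa using hL
  | t :: u :: L =>
    rw [hnorm] at hlen
    simp at hlen

end NielsenReduction

section NielsenConj

/-- `NielsenConj x y u v`: the pair `(u, v)` arises from `(x, y)` by elementary Nielsen moves and
simultaneous conjugation. -/
inductive NielsenConj {G : Type*} [Group G] (x y : G) : G → G → Prop
  | refl : NielsenConj x y x y
  | swap {u v : G} : NielsenConj x y u v → NielsenConj x y v u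
  | inv {u v : G} : NielsenConj x y u v → NielsenConj x y u⁻¹ v
  | mul {u v : G} : NielsenConj x y u v → NielsenConj x y (u * v) v
  | conj {u v : G} (g : G) : NielsenConj x y u v → NielsenConj x y (g * u * g⁻¹) (g * v * g⁻¹)

/-- The letters available for writing words in `x` and `y`. -/
def letters {G : Type*} [Group G] (x y : G) : Set G := {x, x⁻¹, y, y⁻¹}

theorem letters_comm {G : Type*} [Group G] (x y : G) : letters x y = letters y x := by
  ext
  simp only [letters, Set.mem_insert_iff, Set.mem_singleton_iff]
  tauto

theorem letters_inv_left {G : Type*} [Group G] (x y : G) : letters x⁻¹ y = letters x y := by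
  rw [letters, letters, inv_inv, Set.insert_comm]

variable {G : Type*} [Group G] {x y u v s t : G}

theorem NielsenConj.trans (hxu : NielsenConj x y u v) (hus : NielsenConj u v s t) :
    NielsenConj x y s t := by
  induction hus with
  | refl => exact hxu
  | swap _ ih => exact ih.swap
  | inv _ ih => exact ih.inv
  | mul _ ih => exact ih.mul
  | conj g _ ih => exact ih.conj g

theorem NielsenConj.inv_right (h : NielsenConj x y u v) : NielsenConj x y u v⁻¹ :=
  h.swap.inv.swap

theorem NielsenConj.symm (h : NielsenConj x y u v) : NielsenConj u v x y := by
  induction h with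
  | refl => exact .refl
  | swap _ ih => exact NielsenConj.refl.swap.trans ih
  | @inv u v _ ih =>
    have hback : NielsenConj u⁻¹ v u v := by simpa using (NielsenConj.refl (x := u⁻¹)).inv
    exact hback.trans ih
  | @mul u v _ ih =>
    have hback : NielsenConj (u * v) v u v := by
      simpa using (NielsenConj.refl (x := u * v) (y := v)).inv_right.mul.inv_right
    exact hback.trans ih
  | @conj u v g _ ih =>
    have hback : NielsenConj (g * u * g⁻¹) (g * v * g⁻¹) u v := by
      simpa [mul_assoc] using
        (NielsenConj.refl (x := g * u * g⁻¹) (y := g * v * g⁻¹)).conj g⁻¹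
    exact hback.trans ih

theorem NielsenConj.closure_eq_top (h : NielsenConj x y u v)
    (hxy : Subgroup.closure {x, y} = ⊤) : Subgroup.closure {u, v} = ⊤ := by
  have of_mem : ∀ {u v s t : G}, Subgroup.closure {u, v} = ⊤ → u ∈ Subgroup.closure {s, t} →
      v ∈ Subgroup.closure {s, t} → Subgroup.closure {s, t} = ⊤ := fun huv hu hv =>
    top_le_iff.1 (huv ▸ (Subgroup.closure_le _).2 (Set.pair_subset hu hv))
  have left_mem : ∀ s t : G, s ∈ Subgroup.closure {s, t} := fun s t =>
    Subgroup.subset_closure (Set.mem_insert s _)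
  have right_mem : ∀ s t : G, t ∈ Subgroup.closure {s, t} := fun s t =>
    Subgroup.subset_closure (Set.mem_insert_of_mem s rfl)
  induction h with
  | refl => exact hxy
  | swap _ ih => rwa [Set.pair_comm]
  | @inv u v _ ih => exact of_mem ih (inv_mem_iff.1 (left_mem u⁻¹ v)) (right_mem u⁻¹ v)
  | @mul u v _ ih =>
    refine of_mem ih ?_ (right_mem (u * v) v)
    exact (Subgroup.mul_mem_cancel_right _ (right_mem (u * v) v)).1 (left_mem (u * v) v)
  | @conj u v g _ ih =>
    have himage := congrArg (Subgroup.map (MulAut.conj g).toMonoidHom) ih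
    rwa [MonoidHom.map_closure, Set.image_pair,
      Subgroup.map_top_of_surjective _ (MulAut.conj g).surjective] at himage

theorem commute_of_closure_pair_eq_top (hxy : Commute x y) (htop : Subgroup.closure {x, y} = ⊤)
    (a b : G) : Commute a b := by
  have hcomm : ∀ s ∈ ({x, y} : Set G), ∀ t ∈ ({x, y} : Set G), s * t = t * s := by
    simp [hxy.eq]
  have := Subgroup.isMulCommutative_closure hcomm
  exact setLike_mul_comm (htop ▸ Subgroup.mem_top a) (htop ▸ Subgroup.mem_top b)

theorem NielsenConj.of_mem_letters (hu : u ∈ letters x y) (hv : v ∈ letters x y)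
    (huv : ¬ Commute u v) : NielsenConj x y u v := by
  obtain ⟨t, ht, hletters⟩ : ∃ t, NielsenConj x y u t ∧ letters u t = letters x y := by
    rcases hu with rfl | rfl | rfl | rfl
    · exact ⟨y, .refl, rfl⟩
    · exact ⟨y, NielsenConj.refl.inv, letters_inv_left x y⟩
    · exact ⟨x, NielsenConj.refl.swap, letters_comm u x⟩
    · exact ⟨x, NielsenConj.refl.swap.inv, by rw [letters_inv_left, letters_comm]⟩
  rw [← hletters] at hv
  rcases hv with rfl | rfl | rfl | rfl
  · exact absurd (Commute.refl v) huv
  · exact absurd (Commute.refl u).inv_right huv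
  · exact ht
  · exact ht.inv_right

end NielsenConj

section NielsenMinimal

open FreeGroup

variable {α : Type*} [DecidableEq α] {x y u v : FreeGroup α}

/-- A pair is Nielsen minimal if Nielsen moves and simultaneous conjugation never decrease its
total length. -/
def NielsenMinimal (x y : FreeGroup α) : Prop :=
  ∀ u v, NielsenConj x y u v → x.norm + y.norm ≤ u.norm + v.norm

theorem exists_nielsenMinimal (x y : FreeGroup α) :
    ∃ u v, NielsenConj x y u v ∧ NielsenMinimal u v := by
  obtain ⟨⟨u, v⟩, huv, hmin⟩ := exists_minimalFor_of_wellFoundedLT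
    (fun p : FreeGroup α × FreeGroup α => NielsenConj x y p.1 p.2)
    (fun p => p.1.norm + p.2.norm) ⟨(x, y), .refl⟩
  refine ⟨u, v, huv, fun s t hst => ?_⟩
  exact (le_total _ _).elim id (hmin (j := (s, t)) (huv.trans hst))

theorem NielsenMinimal.of_nielsenConj (h : NielsenMinimal x y) (huv : NielsenConj x y u v)
    (hle : u.norm + v.norm ≤ x.norm + y.norm) : NielsenMinimal u v :=
  fun s t hst => hle.trans (h s t (huv.trans hst))

theorem NielsenMinimal.swap (h : NielsenMinimal x y) : NielsenMinimal y x :=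
  h.of_nielsenConj NielsenConj.refl.swap (add_comm _ _).le

theorem NielsenMinimal.inv (h : NielsenMinimal x y) : NielsenMinimal x⁻¹ y :=
  h.of_nielsenConj NielsenConj.refl.inv (by rw [norm_inv_eq])

theorem NielsenMinimal.inv_right (h : NielsenMinimal x y) : NielsenMinimal x y⁻¹ :=
  h.swap.inv.swap

theorem NielsenMinimal.two_mul_gromovProduct_le_right (h : NielsenMinimal x y) :
    2 * gromovProduct x y ≤ y.norm := by
  have hmin := h _ _ NielsenConj.refl.inv.mul
  have := norm_inv_mul_add_two_mul_gromovProduct x y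
  omega

theorem NielsenMinimal.two_mul_gromovProduct_le_left (h : NielsenMinimal x y) :
    2 * gromovProduct x y ≤ x.norm :=
  gromovProduct_comm x y ▸ h.swap.two_mul_gromovProduct_le_right

theorem NielsenMinimal.gromovProduct_add_gromovProduct_inv_left_lt (h : NielsenMinimal x y)
    (hx : x ≠ 1) : gromovProduct x y + gromovProduct x⁻¹ y < x.norm := by
  have hle := h.two_mul_gromovProduct_le_left
  have hle_inv := h.inv.two_mul_gromovProduct_le_left
  have hlt := two_mul_gromovProduct_inv_self_lt hx
  rw [norm_inv_eq] at hle_inv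
  by_contra! hge
  have hhalf : gromovProduct x⁻¹ y ≤ gromovProduct y x := by
    rw [gromovProduct_comm y x]
    omega
  have := le_gromovProduct_trans le_rfl hhalf
  omega

theorem NielsenMinimal.gromovProduct_add_gromovProduct_inv_inv_lt (h : NielsenMinimal x y)
    (hx : x ≠ 1) : gromovProduct x y + gromovProduct x⁻¹ y⁻¹ < x.norm := by
  have hle := h.two_mul_gromovProduct_le_left
  have hle_right := h.two_mul_gromovProduct_le_right
  have hle_inv := h.inv.inv_right.two_mul_gromovProduct_le_left
  rw [norm_inv_eq] at hle_inv
  by_contra! hge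
  obtain ⟨p, hp, hpx, hpy⟩ := exists_norm_eq_gromovProduct x y
  -- Conjugating `(x, y * x⁻¹)` by the common half `p` of `x` and `y` shortens the pair.
  have hmin := h _ _ (NielsenConj.refl.swap.inv_right.mul.conj p⁻¹)
  have hconj_x : (p⁻¹ * x⁻¹ * p⁻¹⁻¹).norm ≤ x.norm := by
    rw [show p⁻¹ * x⁻¹ * p⁻¹⁻¹ = (p⁻¹ * x * p)⁻¹ by group, norm_inv_eq]
    have := FreeGroup.norm_mul_le (p⁻¹ * x) p
    omega
  have hcancel : p.norm ≤ gromovProduct (p⁻¹ * y)⁻¹ (p⁻¹ * x)⁻¹ := by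
    have hy : p.norm ≤ gromovProduct (p⁻¹ * y)⁻¹ y⁻¹ := by
      rw [gromovProduct_inv_mul_inv hpy]
      omega
    have hyx : p.norm ≤ gromovProduct y⁻¹ x⁻¹ := by
      rw [gromovProduct_comm]
      omega
    have hx : p.norm ≤ gromovProduct x⁻¹ (p⁻¹ * x)⁻¹ := by
      rw [gromovProduct_comm, gromovProduct_inv_mul_inv hpx]
      omega
    exact le_gromovProduct_trans (le_gromovProduct_trans hy hyx) hx
  have hconj_y : (p⁻¹ * (y * x⁻¹) * p⁻¹⁻¹).norm + x.norm ≤ y.norm := by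
    rw [show p⁻¹ * (y * x⁻¹) * p⁻¹⁻¹ = (p⁻¹ * y) * (p⁻¹ * x)⁻¹ by group]
    have := norm_mul_add_two_mul_gromovProduct (p⁻¹ * y) (p⁻¹ * x)⁻¹
    rw [norm_inv_eq] at this
    omega
  have : x.norm ≠ 0 := mt norm_eq_zero.1 hx
  omega

theorem NielsenMinimal.exists_letters_eq (h : NielsenMinimal x y) (hv : v ∈ letters x y) :
    ∃ t, NielsenMinimal v t ∧ letters v t = letters x y := by
  rcases hv with rfl | rfl | rfl | rfl
  · exact ⟨y, h, rfl⟩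
  · exact ⟨y, h.inv, letters_inv_left x y⟩
  · exact ⟨x, h.swap, letters_comm v x⟩
  · exact ⟨x, h.swap.inv, by rw [letters_inv_left, letters_comm]⟩

theorem NielsenMinimal.isNielsenReduced (h : NielsenMinimal x y) (hx : x ≠ 1) (hy : y ≠ 1) :
    IsNielsenReduced (letters x y) := by
  have one_notMem : 1 ∉ letters x y := by simp [letters, eq_comm, hx, hy]
  refine ⟨one_notMem, fun u hu v hv w hw huv hvw => ?_⟩
  have hv1 : v ≠ 1 := ne_of_mem_of_not_mem hv one_notMem
  obtain ⟨t, ht, hletters⟩ := h.exists_letters_eq hv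
  rw [← hletters] at hu hw
  have hself := two_mul_gromovProduct_inv_self_lt hv1
  have hself_comm := gromovProduct_comm v v⁻¹
  have hle := ht.two_mul_gromovProduct_le_left
  have hle_inv := ht.inv.two_mul_gromovProduct_le_left
  have hle_right := ht.inv_right.two_mul_gromovProduct_le_left
  have hle_inv_inv := ht.inv.inv_right.two_mul_gromovProduct_le_left
  have hlt := ht.gromovProduct_add_gromovProduct_inv_left_lt hv1
  have hlt_right := ht.inv_right.gromovProduct_add_gromovProduct_inv_left_lt hv1
  have hopp := ht.gromovProduct_add_gromovProduct_inv_inv_lt hv1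
  have hopp_right := ht.inv_right.gromovProduct_add_gromovProduct_inv_inv_lt hv1
  rw [inv_inv] at hopp_right
  rw [norm_inv_eq] at hle_inv hle_inv_inv
  rw [gromovProduct_comm]
  rcases hu with rfl | rfl | rfl | rfl <;> rcases hw with rfl | rfl | rfl | rfl <;>
    grind [inv_inv, inv_mul_cancel, mul_inv_cancel]

end NielsenMinimal

section PositiveNielsen

/-- `PositiveNielsen x y p q`: the pair `(p, q)` arises from `(x, y)` by swaps and positive Nielsen
moves, so that `p` and `q` are positive words in `x` and `y`. -/
inductive PositiveNielsen {G : Type*} [Group G] (x y : G) : G → G → Prop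
  | refl : PositiveNielsen x y x y
  | swap {p q : G} : PositiveNielsen x y p q → PositiveNielsen x y q p
  | mul {p q : G} : PositiveNielsen x y p q → PositiveNielsen x y (p * q) q

/-- `SignedPositiveNielsen x y u v`: up to simultaneous conjugation and inversion of either entry,
the pair `(u, v)` arises by swaps and positive Nielsen moves from one of the pairs
`(x^±1, y^±1)`. -/
def SignedPositiveNielsen {G : Type*} [Group G] (x y u v : G) : Prop :=
  ∃ (s t d e : ℤˣ) (p q g : G), PositiveNielsen (x ^ (s : ℤ)) (y ^ (t : ℤ)) p q ∧
    u = g * p ^ (d : ℤ) * g⁻¹ ∧ v = g * q ^ (e : ℤ) * g⁻¹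

variable {G : Type*} [Group G] {x y u v p q : G} {s t : ℤˣ}

theorem PositiveNielsen.signedPositiveNielsen
    (h : PositiveNielsen (x ^ (s : ℤ)) (y ^ (t : ℤ)) p q) : SignedPositiveNielsen x y p q :=
  ⟨s, t, 1, 1, p, q, 1, h, by simp, by simp⟩

theorem SignedPositiveNielsen.swap (h : SignedPositiveNielsen x y u v) :
    SignedPositiveNielsen x y v u := by
  obtain ⟨s, t, d, e, p, q, g, hpq, hu, hv⟩ := h
  exact ⟨s, t, e, d, q, p, g, hpq.swap, hv, hu⟩

theorem SignedPositiveNielsen.inv (h : SignedPositiveNielsen x y u v) :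
    SignedPositiveNielsen x y u⁻¹ v := by
  obtain ⟨s, t, d, e, p, q, g, hpq, rfl, hv⟩ := h
  exact ⟨s, t, -d, e, p, q, g, hpq, by simp [mul_assoc], hv⟩

theorem SignedPositiveNielsen.inv_right (h : SignedPositiveNielsen x y u v) :
    SignedPositiveNielsen x y u v⁻¹ :=
  h.swap.inv.swap

theorem SignedPositiveNielsen.conj (g : G) (h : SignedPositiveNielsen x y u v) :
    SignedPositiveNielsen x y (g * u * g⁻¹) (g * v * g⁻¹) := by
  obtain ⟨s, t, d, e, p, q, k, hpq, rfl, rfl⟩ := h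
  exact ⟨s, t, d, e, p, q, g * k, hpq, by group, by group⟩

theorem PositiveNielsen.signedPositiveNielsen_mul_inv
    (h : PositiveNielsen (x ^ (s : ℤ)) (y ^ (t : ℤ)) p q) :
    SignedPositiveNielsen x y (p * q⁻¹) q ∧ SignedPositiveNielsen x y (q * p⁻¹) p := by
  induction h with
  | refl =>
    have hright : PositiveNielsen (x ^ (s : ℤ)) (y ^ ((-t : ℤˣ) : ℤ)) _ _ := .refl
    have hleft : PositiveNielsen (x ^ ((-s : ℤˣ) : ℤ)) (y ^ (t : ℤ)) _ _ := .refl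
    constructor
    · simpa using hright.mul.signedPositiveNielsen.inv_right
    · simpa using hleft.swap.mul.signedPositiveNielsen.inv_right
  | swap _ ih => exact ih.symm
  | @mul p q hpq _ =>
    constructor
    · simpa using hpq.signedPositiveNielsen
    · simpa [mul_assoc] using (hpq.swap.mul.signedPositiveNielsen.conj p).swap.inv

theorem SignedPositiveNielsen.mul (h : SignedPositiveNielsen x y u v) :
    SignedPositiveNielsen x y (u * v) v := by
  obtain ⟨s, t, d, e, p, q, g, hpq, rfl, rfl⟩ := h
  suffices SignedPositiveNielsen x y (p ^ (d : ℤ) * q ^ (e : ℤ)) (q ^ (e : ℤ)) by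
    simpa [mul_assoc] using this.conj g
  have hmul := hpq.mul.signedPositiveNielsen
  have hdiv := hpq.signedPositiveNielsen_mul_inv.1
  obtain rfl | rfl := Int.units_eq_one_or d <;> obtain rfl | rfl := Int.units_eq_one_or e
  · simpa using hmul
  · simpa using hdiv.inv_right
  · simpa [mul_assoc] using hdiv.inv.conj q⁻¹
  · simpa [mul_assoc] using (hmul.inv.inv_right.conj q)

theorem NielsenConj.signedPositiveNielsen (h : NielsenConj x y u v) :
    SignedPositiveNielsen x y u v := by
  induction h with
  | refl => exact ⟨1, 1, 1, 1, x, y, 1, by simpa using .refl, by simp, by simp⟩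
  | swap _ ih => exact ih.swap
  | inv _ ih => exact ih.inv
  | mul _ ih => exact ih.mul
  | conj g _ ih => exact ih.conj g

end PositiveNielsen

section Weight

open FreeGroup

variable {α : Type*}

/-- The weight of `g` with respect to `ε` is the exponent sum of `g`, the letter `i` being counted
with the sign `ε i`. Its absolute value bounds the lengths of all conjugates of `g` from below, and
it equals the length of `g` if `g` is a positive word in the letters `i ^ ε i`. -/
def weight (ε : α → ℤˣ) (g : FreeGroup α) : ℤ :=
  (lift (fun i => Multiplicative.ofAdd (ε i : ℤ)) g).toAdd

theorem weight_mul (ε : α → ℤˣ) (g h : FreeGroup α) :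
    weight ε (g * h) = weight ε g + weight ε h := by
  rw [weight, _root_.map_mul, toAdd_mul, weight, weight]

theorem weight_inv (ε : α → ℤˣ) (g : FreeGroup α) : weight ε g⁻¹ = -weight ε g := by
  rw [weight, _root_.map_inv, toAdd_inv, weight]

theorem weight_of (ε : α → ℤˣ) (i : α) : weight ε (of i) = ε i := by
  rw [weight, lift_apply_of, toAdd_ofAdd]

theorem weight_conj (ε : α → ℤˣ) (g h : FreeGroup α) : weight ε (g * h * g⁻¹) = weight ε h := by
  rw [weight_mul, weight_mul, weight_inv]
  ring

theorem weight_mul_commutator (ε : α → ℤˣ) (g h : FreeGroup α) :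
    weight ε (g * (g * h * g⁻¹ * h⁻¹)) = weight ε g := by
  simp only [weight_mul, weight_inv]
  ring

theorem weight_of_zpow (ε : α → ℤˣ) (i : α) : weight ε (of i ^ (ε i : ℤ)) = 1 := by
  obtain hi | hi := Int.units_eq_one_or (ε i) <;> simp [hi, weight_inv, weight_of]

theorem abs_weight_mk_le_length (ε : α → ℤˣ) (L : List (α × Bool)) :
    |weight ε (mk L)| ≤ L.length := by
  induction L with
  | nil => simp [weight, ← one_eq_mk]
  | cons l L ih =>
    obtain ⟨i, b⟩ := l
    have hletter : |weight ε (mk [(i, b)])| = 1 := by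
      cases b <;> simp [weight, Int.isUnit_iff_abs_eq.1 (ε i).isUnit]
    rw [← List.singleton_append, ← mul_mk, weight_mul, List.length_append, List.length_singleton]
    push_cast
    exact (abs_add_le _ _).trans (add_le_add hletter.le ih)

variable [DecidableEq α]

theorem norm_of_zpow_units (i : α) (s : ℤˣ) : (of i ^ (s : ℤ)).norm = 1 := by
  obtain rfl | rfl := Int.units_eq_one_or s <;> simp [norm_inv_eq]

theorem abs_weight_le_norm (ε : α → ℤˣ) (g : FreeGroup α) : |weight ε g| ≤ g.norm := by
  simpa only [mk_toWord, FreeGroup.norm] using abs_weight_mk_le_length ε g.toWord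

variable {ε : α → ℤˣ} {x y p q : FreeGroup α}

theorem PositiveNielsen.norm_le_weight (h : PositiveNielsen x y p q) (hx : x.norm ≤ weight ε x)
    (hy : y.norm ≤ weight ε y) : p.norm ≤ weight ε p ∧ q.norm ≤ weight ε q := by
  induction h with
  | refl => exact ⟨hx, hy⟩
  | swap _ ih => exact ih.symm
  | @mul p q _ ih =>
    have := FreeGroup.norm_mul_le p q
    rw [weight_mul]
    omega

theorem PositiveNielsen.exists_norm_mul_zpow_le (h : PositiveNielsen x y p q)
    (hx : x.norm ≤ weight ε x) (hy : y.norm ≤ weight ε y) (hxy : x.norm = y.norm) :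
    (∃ k : ℤ, (p * q ^ k).norm ≤ q.norm) ∧ ∃ k : ℤ, (q * p ^ k).norm ≤ p.norm := by
  induction h with
  | refl => exact ⟨⟨0, by simp [hxy]⟩, ⟨0, by simp [hxy]⟩⟩
  | swap _ ih => exact ih.symm
  | @mul p q h ih =>
    obtain ⟨⟨k, hk⟩, -⟩ := ih
    refine ⟨⟨k - 1, ?_⟩, ⟨-1, ?_⟩⟩
    · rwa [mul_assoc, mul_self_zpow, sub_add_cancel]
    · have hnorm := h.norm_le_weight hx hy
      have hweight := (le_abs_self _).trans (abs_weight_le_norm ε (p * q))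
      rw [weight_mul] at hweight
      rw [zpow_neg_one, mul_inv_rev, mul_inv_cancel_left, norm_inv_eq]
      omega

end Weight

section CyclicLength

open FreeGroup

theorem cyclen_le_norm_conj (w g : F) : cyclen w ≤ (g * w * g⁻¹).norm :=
  Nat.sInf_le ⟨g, rfl⟩

theorem cyclen_le_norm (w : F) : cyclen w ≤ w.norm := by
  simpa using cyclen_le_norm_conj w 1

theorem exists_norm_conj_eq_cyclen (w : F) : ∃ g : F, (g * w * g⁻¹).norm = cyclen w :=
  Nat.sInf_mem (s := {n | ∃ g : F, len (g * w * g⁻¹) = n}) ⟨_, 1, rfl⟩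

theorem cyclen_conj (g w : F) : cyclen (g * w * g⁻¹) = cyclen w := by
  refine le_antisymm ?_ ?_
  · obtain ⟨k, hk⟩ := exists_norm_conj_eq_cyclen w
    rw [← hk]
    simpa [mul_assoc] using cyclen_le_norm_conj (g * w * g⁻¹) (k * g⁻¹)
  · obtain ⟨k, hk⟩ := exists_norm_conj_eq_cyclen (g * w * g⁻¹)
    rw [← hk]
    simpa [mul_assoc] using cyclen_le_norm_conj w (k * g)

theorem abs_weight_le_cyclen (ε : Fin 2 → ℤˣ) (w : F) : |weight ε w| ≤ cyclen w := by
  obtain ⟨g, hg⟩ := exists_norm_conj_eq_cyclen w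
  rw [← hg, ← weight_conj ε g w]
  exact abs_weight_le_norm ε _

theorem cyclen_mul_commutator_le (u r : F) (k l : ℤ) :
    cyclen (u * (u * (u ^ k * r * u ^ l) * u⁻¹ * (u ^ k * r * u ^ l)⁻¹)) ≤
      3 * u.norm + 2 * r.norm := by
  have hconj : u ^ (-k) * (u * (u * (u ^ k * r * u ^ l) * u⁻¹ * (u ^ k * r * u ^ l)⁻¹)) *
      (u ^ (-k))⁻¹ = u ^ 2 * r * u⁻¹ * r⁻¹ := by group
  rw [← cyclen_conj (u ^ (-k)), hconj]
  have h₁ := FreeGroup.norm_mul_le (u ^ 2 * r * u⁻¹) r⁻¹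
  have h₂ := FreeGroup.norm_mul_le (u ^ 2 * r) u⁻¹
  have h₃ := FreeGroup.norm_mul_le (u ^ 2) r
  have h₄ := FreeGroup.norm_mul_le u u
  rw [norm_inv_eq] at h₁ h₂
  rw [← pow_two] at h₄
  exact (cyclen_le_norm _).trans (by omega)

end CyclicLength

section GeneratingPairs

open FreeGroup

variable {x y : F}

theorem not_commute_ga_gb : ¬ Commute ga gb := by
  intro h
  have : (ga * gb).toWord = (gb * ga).toWord := congrArg toWord h
  revert this
  decide

theorem closure_ga_gb : Subgroup.closure {ga, gb} = ⊤ := by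
  rw [← FreeGroup.closure_range_of (Fin 2)]
  congr 1
  ext
  simp [ga, gb, eq_comm]

theorem nielsenConj_of_closure_eq_top (htop : Subgroup.closure {x, y} = ⊤) :
    NielsenConj ga gb x y := by
  obtain ⟨u, v, huv, hmin⟩ := exists_nielsenMinimal x y
  have huv_top := huv.closure_eq_top htop
  have hcomm : ¬ Commute u v := fun h =>
    not_commute_ga_gb (commute_of_closure_pair_eq_top h huv_top ga gb)
  have hu : u ≠ 1 := by
    rintro rfl
    exact hcomm (Commute.one_left v)
  have hv : v ≠ 1 := by
    rintro rfl
    exact hcomm (Commute.one_right u)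
  have hred := hmin.isNielsenReduced hu hv
  have closure_letters : Subgroup.closure (letters u v) = ⊤ := by
    refine top_le_iff.1 (huv_top.ge.trans (Subgroup.closure_mono ?_))
    simp [letters, Set.pair_subset_iff]
  have inv_mem : ∀ s ∈ letters u v, s⁻¹ ∈ letters u v := by
    simp [letters]
  have mem_letters : ∀ g : F, g.norm = 1 → g ∈ letters u v := fun g hg =>
    hred.mem_of_norm_eq_one inv_mem (closure_letters ▸ Subgroup.mem_top g) hg
  exact (huv.trans (.of_mem_letters (mem_letters ga (norm_of 0)) (mem_letters gb (norm_of 1))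
    not_commute_ga_gb)).symm

theorem SignedPositiveNielsen.exists_eq_conj (h : SignedPositiveNielsen ga gb x y) :
    ∃ (ε : Fin 2 → ℤˣ) (g u r : F) (k l : ℤ), x = g * u * g⁻¹ ∧
      y = g * (u ^ k * r * u ^ l) * g⁻¹ ∧ r.norm ≤ u.norm ∧ u.norm ≤ |weight ε u| := by
  obtain ⟨s, t, d, e, p, q, g, hpq, rfl, rfl⟩ := h
  have hweight_a : weight ![s, t] (ga ^ (s : ℤ)) = 1 := weight_of_zpow ![s, t] 0
  have hweight_b : weight ![s, t] (gb ^ (t : ℤ)) = 1 := weight_of_zpow ![s, t] 1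
  have hnorm_a : (ga ^ (s : ℤ)).norm = 1 := norm_of_zpow_units 0 s
  have hnorm_b : (gb ^ (t : ℤ)).norm = 1 := norm_of_zpow_units 1 t
  have ha : (ga ^ (s : ℤ)).norm ≤ weight ![s, t] (ga ^ (s : ℤ)) := by rw [hnorm_a, hweight_a]; rfl
  have hb : (gb ^ (t : ℤ)).norm ≤ weight ![s, t] (gb ^ (t : ℤ)) := by rw [hnorm_b, hweight_b]; rfl
  have hp := (hpq.norm_le_weight ha hb).1.trans (le_abs_self _)
  obtain ⟨-, k, hk⟩ := hpq.exists_norm_mul_zpow_le ha hb (hnorm_a.trans hnorm_b.symm)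
  obtain ⟨l, hu, hl⟩ : ∃ l : ℤ, (p ^ (d : ℤ)).norm ≤ |weight ![s, t] (p ^ (d : ℤ))| ∧
      (q * (p ^ (d : ℤ)) ^ l).norm ≤ (p ^ (d : ℤ)).norm := by
    obtain rfl | rfl := Int.units_eq_one_or d
    · exact ⟨k, by simpa using hp, by simpa using hk⟩
    · exact ⟨-k, by simpa [weight_inv, norm_inv_eq] using hp, by simpa [norm_inv_eq] using hk⟩
  obtain rfl | rfl := Int.units_eq_one_or e
  · exact ⟨![s, t], g, p ^ (d : ℤ), q * (p ^ (d : ℤ)) ^ l, 0, -l, rfl, by simp, hl, hu⟩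
  · exact ⟨![s, t], g, p ^ (d : ℤ), (q * (p ^ (d : ℤ)) ^ l)⁻¹, l, 0, rfl, by simp,
      norm_inv_eq.trans_le hl, hu⟩

theorem SignedPositiveNielsen.cyclen_mul_commutator_bounds (h : SignedPositiveNielsen ga gb x y) :
    cyclen x ≤ cyclen (x * (x * y * x⁻¹ * y⁻¹)) ∧
      cyclen (x * (x * y * x⁻¹ * y⁻¹)) ≤ 5 * cyclen x := by
  obtain ⟨ε, g, u, r, k, l, rfl, rfl, hr, hu⟩ := h.exists_eq_conj
  have hupper := cyclen_mul_commutator_le u r k l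
  generalize u ^ k * r * u ^ l = v at hupper ⊢
  have hconj : g * u * g⁻¹ * (g * u * g⁻¹ * (g * v * g⁻¹) * (g * u * g⁻¹)⁻¹ * (g * v * g⁻¹)⁻¹) =
      g * (u * (u * v * u⁻¹ * v⁻¹)) * g⁻¹ := by group
  rw [hconj, cyclen_conj, cyclen_conj]
  have hle := cyclen_le_norm u
  have hweight := abs_weight_le_cyclen ε u
  have hweight_comm := abs_weight_le_cyclen ε (u * (u * v * u⁻¹ * v⁻¹))
  rw [weight_mul_commutator] at hweight_comm
  omega

theorem signedPositiveNielsen_mulAut (φ : MulAut F) :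
    SignedPositiveNielsen ga gb (φ ga) (φ gb) := by
  have htop : Subgroup.closure {φ ga, φ gb} = ⊤ := by
    have himage := congrArg (Subgroup.map φ.toMonoidHom) closure_ga_gb
    rwa [MonoidHom.map_closure, Set.image_pair,
      Subgroup.map_top_of_surjective _ φ.surjective] at himage
  exact (nielsenConj_of_closure_eq_top htop).signedPositiveNielsen

end GeneratingPairs

/-- `‖φ(a)‖ ≤ ‖φ(a[a,b])‖ ≤ 5‖φ(a)‖` for every automorphism `φ`; in particular `a` and
`a[a,b]` are boundedly translation equivalent. -/
theorem stmt2 :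
    (∀ φ : MulAut F,
      cyclen (φ ga) ≤ cyclen (φ (ga * (ga * gb * ga⁻¹ * gb⁻¹))) ∧
      cyclen (φ (ga * (ga * gb * ga⁻¹ * gb⁻¹))) ≤ 5 * cyclen (φ ga)) ∧
    ∃ C : ℝ, 0 < C ∧ ∀ φ : MulAut F,
      (cyclen (φ ga) : ℝ) ≤ C * cyclen (φ (ga * (ga * gb * ga⁻¹ * gb⁻¹))) ∧
      (cyclen (φ (ga * (ga * gb * ga⁻¹ * gb⁻¹))) : ℝ) ≤ C * cyclen (φ ga) := by
  have bounds : ∀ φ : MulAut F,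
      cyclen (φ ga) ≤ cyclen (φ (ga * (ga * gb * ga⁻¹ * gb⁻¹))) ∧
      cyclen (φ (ga * (ga * gb * ga⁻¹ * gb⁻¹))) ≤ 5 * cyclen (φ ga) := fun φ => by
    simpa only [map_mul, map_inv] using
      (signedPositiveNielsen_mulAut φ).cyclen_mul_commutator_bounds
  refine ⟨bounds, 5, by norm_num, fun φ => ⟨?_, by exact_mod_cast (bounds φ).2⟩⟩
  exact_mod_cast (bounds φ).1.trans (Nat.le_mul_of_pos_left _ (by norm_num))
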